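/- In Q the elements e0 = (1 + K²)/2 and e1 = (1 − K²)/2 are central orthogonal idempotents with e0 + e1 = 1. Setting f⁺ = −i·F and f⁻ = E·K^{-1}, one has f⁺·f⁻ + f⁻·f⁺ = e1 and Δ(f^±) = f^± ⊗ 1 + K^{-1} ⊗ f^±. Moreover the two-sided ideal Q₁ = e1·Q is an 8-dimensional semisimple ℂ-algebra isomorphic to M₂(ℂ) × M₂(ℂ) (a direct sum of two Clifford algebras), while the two-sided ideal Q₀ = e0·Q is an 8-dimensional non-semisimple ℂ-algebra, and Q = Q₀ ⊕ Q₁ as algebras. -/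

import Mathlib

open TensorProduct

set_option maxHeartbeats 1000000
set_option synthInstance.maxHeartbeats 400000

noncomputable section

/-- Generators of the restricted quantum group `Q = \bar U_i sl(2)`. -/
inductive QGen : Type
  | E | F | K | Kinv
deriving DecidableEq

/-- The free algebra on the generators. -/
abbrev FA : Type := FreeAlgebra ℂ QGen

def ιE : FA := FreeAlgebra.ι ℂ QGen.E
def ιF : FA := FreeAlgebra.ι ℂ QGen.F
def ιK : FA := FreeAlgebra.ι ℂ QGen.K
def ιKi : FA := FreeAlgebra.ι ℂ QGen.Kinv

/-- Defining relations of `\bar U_i sl(2)` (at `q = i`, i.e. `p = 2`). -/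
inductive QRel : FA → FA → Prop
  | KKi : QRel (ιK * ιKi) 1
  | KiK : QRel (ιKi * ιK) 1
  | KEKi : QRel (ιK * ιE * ιKi) (-ιE)
  | KFKi : QRel (ιK * ιF * ιKi) (-ιF)
  | EF : QRel (ιE * ιF - ιF * ιE) ((2 * Complex.I)⁻¹ • (ιK - ιKi))
  | Esq : QRel (ιE ^ 2) 0
  | Fsq : QRel (ιF ^ 2) 0
  | K4 : QRel (ιK ^ 4) 1

/-- The restricted quantum group `\bar U_i sl(2)`: the quotient of the free algebra
by the two-sided ideal generated by the defining relations. -/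
abbrev Q : Type := RingQuot QRel

def gE : Q := RingQuot.mkAlgHom ℂ QRel ιE
def gF : Q := RingQuot.mkAlgHom ℂ QRel ιF
def gK : Q := RingQuot.mkAlgHom ℂ QRel ιK
def gKi : Q := RingQuot.mkAlgHom ℂ QRel ιKi

section Gadgets

variable (k : Type) [Field k] (A : Type) [Ring A] [Algebra k A]

abbrev TP2 : Type := A ⊗[k] A
abbrev TP3 : Type := A ⊗[k] (A ⊗[k] A)
abbrev TP4 : Type := A ⊗[k] (A ⊗[k] (A ⊗[k] A))

/-- Multiplication `a ⊗ b ↦ a * b`. -/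
def mulA : TP2 k A →ₗ[k] A := LinearMap.mul' k A

/-- Tensor flip `a ⊗ b ↦ b ⊗ a`. -/
def flipA : TP2 k A →ₗ[k] TP2 k A := (TensorProduct.comm k A A).toLinearMap

/-- `a ↦ a ⊗ 1`. -/
def lTen : A →ₗ[k] TP2 k A := (TensorProduct.mk k A A).flip 1

/-- `a ↦ 1 ⊗ a`. -/
def rTen : A →ₗ[k] TP2 k A := TensorProduct.mk k A A 1

/-- `a ⊗ b ↦ a ⊗ b ⊗ 1`. -/
def emb12 : TP2 k A →ₗ[k] TP3 k A := TensorProduct.map LinearMap.id (lTen k A)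

/-- `a ⊗ b ↦ a ⊗ 1 ⊗ b`. -/
def emb13 : TP2 k A →ₗ[k] TP3 k A := TensorProduct.map LinearMap.id (rTen k A)

/-- `a ⊗ b ↦ 1 ⊗ a ⊗ b`. -/
def emb23 : TP2 k A →ₗ[k] TP3 k A := TensorProduct.mk k A (TP2 k A) 1

/-- `a ⊗ b ⊗ c ↦ a ⊗ c ⊗ b`. -/
def perm132 : TP3 k A →ₗ[k] TP3 k A := TensorProduct.map LinearMap.id (flipA k A)

/-- `a ⊗ b ⊗ c ↦ b ⊗ c ⊗ a`. -/
def perm231 : TP3 k A →ₗ[k] TP3 k A :=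
  (TensorProduct.assoc k A A A).toLinearMap ∘ₗ (TensorProduct.comm k A (TP2 k A)).toLinearMap

/-- `a ⊗ b ⊗ c ↦ c ⊗ a ⊗ b`. -/
def perm312 : TP3 k A →ₗ[k] TP3 k A :=
  (TensorProduct.comm k (TP2 k A) A).toLinearMap ∘ₗ (TensorProduct.assoc k A A A).symm.toLinearMap

/-- `a ⊗ b ⊗ c ↦ b ⊗ a ⊗ c`. -/
def perm213 : TP3 k A →ₗ[k] TP3 k A :=
  (TensorProduct.assoc k A A A).toLinearMap ∘ₗ
    (TensorProduct.map (flipA k A) LinearMap.id) ∘ₗ (TensorProduct.assoc k A A A).symm.toLinearMap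

variable {k A}

/-- `(Δ ⊗ id)` on two tensor factors, landing in the triple tensor product. -/
def copL (D : A →ₐ[k] TP2 k A) : TP2 k A →ₗ[k] TP3 k A :=
  (TensorProduct.assoc k A A A).toLinearMap ∘ₗ TensorProduct.map D.toLinearMap LinearMap.id

/-- `(id ⊗ Δ)` on two tensor factors. -/
def copR (D : A →ₐ[k] TP2 k A) : TP2 k A →ₗ[k] TP3 k A :=
  TensorProduct.map LinearMap.id D.toLinearMap

/-- `(ε ⊗ id) : A ⊗ A → A`. -/
def cuL (ce : A →ₐ[k] k) : TP2 k A →ₗ[k] A :=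
  (TensorProduct.lid k A).toLinearMap ∘ₗ TensorProduct.map ce.toLinearMap LinearMap.id

/-- `(id ⊗ ε) : A ⊗ A → A`. -/
def cuR (ce : A →ₐ[k] k) : TP2 k A →ₗ[k] A :=
  (TensorProduct.rid k A).toLinearMap ∘ₗ TensorProduct.map LinearMap.id ce.toLinearMap

/-- `(id ⊗ ε ⊗ id) : A ⊗ A ⊗ A → A ⊗ A`. -/
def cuMid (ce : A →ₐ[k] k) : TP3 k A →ₗ[k] TP2 k A :=
  TensorProduct.map LinearMap.id (cuL ce)

/-- `(Δ ⊗ id ⊗ id)`. -/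
def cop4_1 (D : A →ₐ[k] TP2 k A) : TP3 k A →ₗ[k] TP4 k A :=
  (TensorProduct.assoc k A A (TP2 k A)).toLinearMap ∘ₗ TensorProduct.map D.toLinearMap LinearMap.id

/-- `(id ⊗ Δ ⊗ id)`. -/
def cop4_2 (D : A →ₐ[k] TP2 k A) : TP3 k A →ₗ[k] TP4 k A :=
  TensorProduct.map LinearMap.id (copL D)

/-- `(id ⊗ id ⊗ Δ)`. -/
def cop4_3 (D : A →ₐ[k] TP2 k A) : TP3 k A →ₗ[k] TP4 k A :=
  TensorProduct.map LinearMap.id (copR D)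

/-- `a ⊗ b ⊗ c ↦ a ⊗ b ⊗ c ⊗ 1`, i.e. `Φ ↦ Φ ⊗ 1`. -/
def pad4 : TP3 k A →ₗ[k] TP4 k A :=
  TensorProduct.map LinearMap.id (TensorProduct.map LinearMap.id (lTen k A))

/-- `a ⊗ b ⊗ c ↦ f(a) * g(b) * h(c)`. -/
def tmap3 (f g h : A →ₗ[k] A) : TP3 k A →ₗ[k] A :=
  mulA k A ∘ₗ TensorProduct.map f (mulA k A ∘ₗ TensorProduct.map g h)

/-- `a ⊗ b ↦ S(a) * b`, used in the antipode axiom `m ∘ (S ⊗ id) ∘ Δ = 1·ε`. -/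
def antipL (s : A →ₗ[k] A) : TP2 k A →ₗ[k] A := mulA k A ∘ₗ TensorProduct.map s LinearMap.id

/-- `a ⊗ b ↦ a * S(b)`. -/
def antipR (s : A →ₗ[k] A) : TP2 k A →ₗ[k] A := mulA k A ∘ₗ TensorProduct.map LinearMap.id s

end Gadgets

/-- Central idempotent `e₀ = (1 + K²)/2`. -/
def e0 : Q := (2:ℂ)⁻¹ • (1 + gK ^ 2)

/-- Central idempotent `e₁ = (1 − K²)/2`. -/
def e1 : Q := (2:ℂ)⁻¹ • (1 - gK ^ 2)

/-- `f⁺ = −i F`. -/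
def fp : Q := (-Complex.I) • gF

/-- `f⁻ = E K⁻¹`. -/
def fm : Q := gE * gKi

/-- The Casimir element `C = FE − (i/4)(K − K⁻¹)`. -/
def Cas : Q := gF * gE - (Complex.I / 4) • (gK - gKi)

def t2 (a b : Q) : TP2 ℂ Q := a ⊗ₜ[ℂ] b

def t3 (a b c : Q) : TP3 ℂ Q := a ⊗ₜ[ℂ] (b ⊗ₜ[ℂ] c)

def eEF : Q := gE * gF
def eEK : Q := gE * gK
def eFK : Q := gF * gK
def eEFK : Q := gE * gF * gK

/-- `Φ^{010}` component of the coassociator. -/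
def Phi010 : TP3 ℂ Q :=
  t3 1 1 1 - (1 + Complex.I) • t3 gE gK gF + (1 - Complex.I) • t3 eFK gK eEK
    + (2:ℂ) • t3 eEFK 1 eEFK

/-- `Φ^{101}` component of the coassociator. -/
def Phi101 : TP3 ℂ Q :=
  (Complex.I - 1) • t3 1 gF eEK + t3 1 gK 1 + (2:ℂ) • t3 1 eEF eEFK
    - (1 + Complex.I) • t3 1 eEK gF - (1 + Complex.I) • t3 gE eFK 1
    + (2 * Complex.I) • t3 gE eEFK gF + (1 - Complex.I) • t3 eFK gE 1
    - (2 * Complex.I) • t3 eFK eEFK eEK - (2:ℂ) • t3 eEFK eEF 1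

/-- `Φ^{111}` component of the coassociator. -/
def Phi111 (β : ℂ) : TP3 ℂ Q :=
  (Complex.I * β ^ 2) • (
    (1 + Complex.I) • t3 1 gF eEK - t3 1 gK 1 - (2:ℂ) • t3 1 eEF 1
      - (2 * Complex.I) • t3 1 eEF eEFK + (1 + Complex.I) • t3 1 eEK gF
      - (1 + Complex.I) • t3 gE 1 gF + (1 + Complex.I) • t3 gE eFK 1
      + (2 * Complex.I) • t3 gE eFK eEFK + (2:ℂ) • t3 gE eEFK gF
      - (1 + Complex.I) • t3 eFK 1 eEK + (1 + Complex.I) • t3 eFK gE 1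
      + (2 * Complex.I) • t3 eFK gE eEFK + (2:ℂ) • t3 eFK eEFK eEK
      + (2 * Complex.I) • t3 eEFK gF eEK + (2 * Complex.I) • t3 eEFK gK eEFK
      - (2 * Complex.I) • t3 eEFK eEF 1 + (2 * Complex.I) • t3 eEFK eEK gF
      + (4:ℂ) • t3 eEFK eEF eEFK)

/-- The coassociator `Φ` of the quasi-Hopf algebra structure on `Q`. -/
def Phi (β : ℂ) : TP3 ℂ Q :=
  t3 e0 e0 e0 + t3 e1 e0 e0 + Phi010 * t3 e0 e1 e0 + t3 e0 e0 e1
    + t3 e1 e1 e0 + Phi101 * t3 e1 e0 e1 + t3 e0 e1 e1 + Phi111 β * t3 e1 e1 e1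

def R00 : TP2 ℂ Q :=
  (2:ℂ)⁻¹ • ((t2 1 1 + t2 1 gK + t2 gK 1 - t2 gK gK) * (t2 1 1 + (2 * Complex.I) • t2 gE gF))

def R01 : TP2 ℂ Q :=
  (2:ℂ)⁻¹ • ((t2 1 1 - Complex.I • t2 1 gK + t2 gK 1 + Complex.I • t2 gK gK) *
    (t2 1 1 + (1 - Complex.I) • t2 eFK eEK - (1 - Complex.I) • t2 gE gF
      + (1 + Complex.I) • t2 eEFK 1 + (2 * Complex.I) • t2 eEFK eEFK))

def R10 : TP2 ℂ Q :=
  (2:ℂ)⁻¹ • ((t2 1 1 + t2 1 gK - Complex.I • t2 gK 1 + Complex.I • t2 gK gK) *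
    (t2 1 gK + (1 - Complex.I) • t2 eFK gE + (1 - Complex.I) • t2 gE eFK
      - (1 - Complex.I) • t2 1 eEF - (2 * Complex.I) • t2 eEFK eEF))

def R11 (β : ℂ) : TP2 ℂ Q :=
  (β / 2) • ((t2 1 1 - Complex.I • t2 1 gK - Complex.I • t2 gK 1 + t2 gK gK) *
    ((-Complex.I) • t2 gK 1 + (2 * Complex.I) • t2 eEK gF + (1 - Complex.I) • t2 gK eEFK
      - (1 + Complex.I) • t2 eEF 1 - (2 * Complex.I) • t2 eEF eEFK))

/-- The universal R-matrix `R` of the quasi-triangular quasi-Hopf structure on `Q`. -/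
def Rmat (β : ℂ) : TP2 ℂ Q :=
  R00 * t2 e0 e0 + R01 * t2 e0 e1 + R10 * t2 e1 e0 + R11 β * t2 e1 e1

/-- The standard R-matrix `R_st` of the quotient `Q/(K²-1)`. -/
def Rst : TP2 ℂ Q :=
  (2:ℂ)⁻¹ • ∑ m ∈ Finset.range 2, ∑ n ∈ Finset.range 2,
    ((-1:ℂ) ^ (m * n)) • (t2 (gK ^ m) (gK ^ n) * (t2 1 1 + (2 * Complex.I) • t2 gE gF))

/-- The monodromy matrix `M = R₂₁ · R`. -/
def Mmat (β : ℂ) : TP2 ℂ Q := flipA ℂ Q (Rmat β) * Rmat β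

/-- The ribbon element `v = (e₀ − iβ K e₁)(1 − 2 f⁺ f⁻)`. -/
def vRib (β : ℂ) : Q := (e0 - (Complex.I * β) • (gK * e1)) * (1 - (2:ℂ) • (fp * fm))

/-- The coevaluation element `β = e₀ − 2iβ² C e₁`. -/
def bbEl (β : ℂ) : Q := e0 - (2 * Complex.I * β ^ 2) • (Cas * e1)

/-- `b ⊗ c ↦ S(b · bb · S(c))`, inner part of the Drinfeld element. -/
def uInner (S : Q →ₗ[ℂ] Q) (bb : Q) : TP2 ℂ Q →ₗ[ℂ] Q :=
  S ∘ₗ mulA ℂ Q ∘ₗ TensorProduct.map (LinearMap.mulRight ℂ bb) S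

/-- `Φ' ⊗ Φ'' ⊗ Φ''' ↦ S(Φ'' · bb · S(Φ''')) ⊗ Φ'`. -/
def uMap1 (S : Q →ₗ[ℂ] Q) (bb : Q) : TP3 ℂ Q →ₗ[ℂ] TP2 ℂ Q :=
  TensorProduct.map (uInner S bb) LinearMap.id ∘ₗ (TensorProduct.comm ℂ Q (TP2 ℂ Q)).toLinearMap

/-- `R' ⊗ R'' ↦ S(R'') · al · R'`. -/
def uMap2 (S : Q →ₗ[ℂ] Q) (al : Q) : TP2 ℂ Q →ₗ[ℂ] Q :=
  mulA ℂ Q ∘ₗ TensorProduct.map (LinearMap.mulRight ℂ al ∘ₗ S) LinearMap.id ∘ₗ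
    (TensorProduct.comm ℂ Q Q).toLinearMap

/-- `(x ⊗ a) ⊗ (R' ⊗ R'') ↦ x · (S(R'') · al · R') · a`. -/
def uBig (S : Q →ₗ[ℂ] Q) (al : Q) : TP2 ℂ Q ⊗[ℂ] TP2 ℂ Q →ₗ[ℂ] Q :=
  mulA ℂ Q ∘ₗ TensorProduct.map LinearMap.id (mulA ℂ Q ∘ₗ (TensorProduct.comm ℂ Q Q).toLinearMap)
    ∘ₗ (TensorProduct.assoc ℂ Q Q Q).toLinearMap ∘ₗ TensorProduct.map LinearMap.id (uMap2 S al)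

/-- The Drinfeld element `u = Σ S(Φ''·b·S(Φ'''))·S(R'')·α·R'·Φ'` (with `α = 1`). -/
def uDrin (β : ℂ) (S : Q →ₗ[ℂ] Q) : Q :=
  uBig S 1 (uMap1 S (bbEl β) (Phi β) ⊗ₜ[ℂ] Rmat β)

/-- The balancing element `g = b · S(α) · v⁻¹ · u` (with `α = 1`). -/
def balG (β : ℂ) (S : Q →ₗ[ℂ] Q) : Q :=
  bbEl β * S 1 * Ring.inverse (vRib β) * uDrin β S

/-- The cointegral `c = (β²/i)·E·F·(1 + K + K² + K³)`. -/
def cInt (β : ℂ) : Q := (β ^ 2 / Complex.I) • (gE * gF * (1 + gK + gK ^ 2 + gK ^ 3))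

/-- The q-trace of a one-dimensional representation, with balancing element `K⁻¹`. -/
def qTr1 (ρ : Q →ₐ[ℂ] ℂ) : Q →ₗ[ℂ] ℂ := ρ.toLinearMap ∘ₗ LinearMap.mulLeft ℂ gK

/-- The q-trace of a two-dimensional (matrix) representation, with balancing element `K⁻¹`. -/
def qTrM (ρ : Q →ₐ[ℂ] Matrix (Fin 2) (Fin 2) ℂ) : Q →ₗ[ℂ] ℂ :=
  Matrix.traceLinearMap (Fin 2) ℂ ℂ ∘ₗ ρ.toLinearMap ∘ₗ LinearMap.mulLeft ℂ gK

/-- The Drinfeld mapping `φ ↦ (φ ⊗ id)(M)`. -/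
def drinfeldImg (β : ℂ) (φ : Q →ₗ[ℂ] ℂ) : Q :=
  (TensorProduct.lid ℂ Q) (TensorProduct.map φ LinearMap.id (Mmat β))

/-! `K²` is a central involution, so `Q` splits along `K² = 1` and `K² = -1`. Where `K² = -1`, the
remaining choice of the sign `s = ±1` gives two-dimensional Clifford modules, and `EF + FE` acts on
them by `s`, which separates the two copies of `M₂(ℂ)`. Where `K² = 1`, `E` and `F` commute, and `Q`
acts by `2 × 2` matrices over `ℂ[x, y]/(x², y²)`, with `E = x J`, `F = y J`, `K = diag(1, -1)` and
`J` the swap; here `E a E = 0` for every `a`, which rules out semisimplicity. The resulting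
homomorphism is onto, the image of the second representation has dimension at least `8`, and the
sixteen monomials `Kᶜ Eᵃ Fᵇ` span `Q`, so counting dimensions shows that it is an isomorphism. -/

namespace RestrictedQuantumGroup

open Complex DualNumber Matrix

section General

theorem submodule_eq_top_of_adjoin_eq_top {k A : Type*} [CommSemiring k] [Semiring A] [Algebra k A]
    {s : Set A} (hs : Algebra.adjoin k s = ⊤) {S : Submodule k A} (one_mem : 1 ∈ S)
    (mul_mem : ∀ g ∈ s, ∀ x ∈ S, g * x ∈ S) : S = ⊤ := by
  suffices h : ∀ a ∈ Algebra.adjoin k s, ∀ x ∈ S, a * x ∈ S from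
    Submodule.eq_top_iff'.2 fun a => by simpa using h a (hs ▸ Algebra.mem_top) 1 one_mem
  intro a ha
  induction ha using Algebra.adjoin_induction with
  | mem g hg => exact mul_mem g hg
  | algebraMap r =>
    intro x hx
    rw [← Algebra.smul_def]
    exact S.smul_mem r hx
  | add a b _ _ iha ihb =>
    intro x hx
    rw [add_mul]
    exact S.add_mem (iha x hx) (ihb x hx)
  | mul a b _ _ iha ihb =>
    intro x hx
    rw [mul_assoc]
    exact iha _ (ihb x hx)

theorem algHom_prod_surjective {k A B C : Type*} [CommSemiring k] [Ring A] [Ring B] [Ring C]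
    [Algebra k A] [Algebra k B] [Algebra k C] {f : A →ₐ[k] B} {g : A →ₐ[k] C}
    (hf : Function.Surjective f) (hg : Function.Surjective g) {z : A} (hfz : f z = 1)
    (hgz : g z = 0) : Function.Surjective (f.prod g) := by
  rintro ⟨b, c⟩
  obtain ⟨a, rfl⟩ := hf b
  obtain ⟨a', rfl⟩ := hg c
  exact ⟨z * a + (1 - z) * a', by simp [hfz, hgz]⟩

theorem not_isSemisimpleRing_of_mul_mul_self_eq_zero {A : Type*} [Ring A] {x : A} (hx : x ≠ 0)
    (h : ∀ a, x * a * x = 0) : ¬ IsSemisimpleRing A := by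
  intro _
  obtain ⟨e, he, hspan⟩ := IsSemisimpleRing.ideal_eq_span_idempotent (Ideal.span {x})
  obtain ⟨a, rfl⟩ := Ideal.mem_span_singleton'.1 (hspan ▸ Ideal.mem_span_singleton_self e)
  have he_zero : a * x = 0 := by rw [← he.eq, mul_assoc, ← mul_assoc x, h, mul_zero]
  have hx_mem : x ∈ Ideal.span {a * x} := hspan ▸ Ideal.mem_span_singleton_self x
  exact hx (by simpa [he_zero] using hx_mem)

theorem mul_eq_neg_mul_of_conj_eq_neg {A : Type*} [Ring A] {k k' x : A} (hk : k' * k = 1)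
    (h : k * x * k' = -x) : k * x = -(x * k) := by
  rw [← neg_mul, ← h, mul_assoc _ k', hk, mul_one]

theorem finrank_dualNumber (k A : Type*) [CommRing k] [Nontrivial k] [CommRing A] [Algebra k A]
    [Module.Free k A] [Module.Finite k A] :
    Module.finrank k A[ε] = 2 * Module.finrank k A :=
  (Module.finrank_prod (R := k) (M := A) (M' := A)).trans (two_mul _).symm

theorem adjoin_inl_eps_eps (k : Type*) [CommRing k] :
    Algebra.adjoin k {(TrivSqZeroExt.inl ε : k[ε][ε]), ε} = ⊤ := by
  have hbase : Algebra.adjoin k {(ε : k[ε])} = ⊤ := by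
    rw [← DualNumber.range_inlAlgHom_sup_adjoin_eps, eq_comm, sup_eq_right]
    rintro _ ⟨r, rfl⟩
    exact Subalgebra.algebraMap_mem _ r
  rw [Set.insert_eq, Algebra.adjoin_union, ← DualNumber.range_inlAlgHom_sup_adjoin_eps,
    ← Algebra.map_top, ← hbase, AlgHom.map_adjoin, Set.image_singleton]
  rfl

theorem one_vecMul_swap (R : Type*) [NonAssocSemiring R] :
    (1 : Fin 2 → R) ᵥ* !![0, 1; 1, 0] = 1 := by
  ext j
  fin_cases j <;> simp [Matrix.vecHead, Matrix.vecTail]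

end General

/-- Elements `E`, `F`, `K` of a `ℂ`-algebra satisfying the relations of `\bar U_i sl(2)`, from which
`K⁻¹` has been eliminated as `K³`. -/
structure IsQTriple {A : Type*} [Ring A] [Algebra ℂ A] (E F K : A) : Prop where
  K_mul_E : K * E = -(E * K)
  K_mul_F : K * F = -(F * K)
  E_mul_F_sub : E * F - F * E = (2 * I)⁻¹ • (K - K ^ 3)
  E_sq : E ^ 2 = 0
  F_sq : F ^ 2 = 0
  K_pow_four : K ^ 4 = 1

namespace IsQTriple

variable {A : Type*} [Ring A] [Algebra ℂ A] {E F K : A}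

theorem K_sq_mul_K_sq (h : IsQTriple E F K) : K ^ 2 * K ^ 2 = 1 := by
  rw [← pow_add, h.K_pow_four]

theorem K_mul_K_pow_three (h : IsQTriple E F K) : K * K ^ 3 = 1 := by
  rw [← pow_succ', h.K_pow_four]

theorem K_sq_mem_center (h : IsQTriple E F K) (hgen : Algebra.adjoin ℂ {E, F, K} = ⊤) :
    K ^ 2 ∈ Subalgebra.center ℂ A := by
  have commute_of_anticommute {x : A} (hx : K * x = -(x * K)) : Commute (K ^ 2) x := by
    rw [commute_iff_eq, pow_two, mul_assoc, hx, mul_neg, ← mul_assoc, hx, neg_mul, neg_neg,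
      mul_assoc]
  refine Subalgebra.mem_center_iff.2 fun b => Commute.eq (Commute.symm ?_)
  refine Algebra.commute_of_mem_adjoin_of_forall_mem_commute
    (hgen ▸ Algebra.mem_top : b ∈ Algebra.adjoin ℂ {E, F, K}) ?_
  rintro x (rfl | rfl | rfl)
  · exact commute_of_anticommute h.K_mul_E
  · exact commute_of_anticommute h.K_mul_F
  · exact Commute.pow_self _ 2

theorem mul_K_pow_of_anticommute {x : A} (hx : K * x = -(x * K)) (c : ℕ) :
    x * K ^ c = (-1 : ℂ) ^ c • (K ^ c * x) := by
  have hsemi : SemiconjBy x K ((-1 : ℂ) • K) := by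
    simp [SemiconjBy, hx]
  rw [(hsemi.pow_right c).eq, smul_pow, smul_mul_assoc]

theorem fermion_anticommutator (h : IsQTriple E F K) :
    (-I • F) * (E * K ^ 3) + (E * K ^ 3) * (-I • F) = (2 : ℂ)⁻¹ • (1 - K ^ 2) := by
  have hKF : K ^ 3 * F = -(F * K ^ 3) := by
    rw [mul_K_pow_of_anticommute h.K_mul_F, Odd.neg_one_pow (by decide), neg_one_smul, neg_neg]
  have hK_six : K ^ 3 * K ^ 3 = K ^ 2 := by
    rw [← pow_add, pow_add K 4 2, h.K_pow_four, one_mul]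
  calc (-I • F) * (E * K ^ 3) + (E * K ^ 3) * (-I • F)
      = I • ((E * F - F * E) * K ^ 3) := by
        simp only [smul_mul_assoc, mul_smul_comm, mul_assoc, hKF, sub_mul, mul_neg]
        module
    _ = (I * (2 * I)⁻¹) • ((K - K ^ 3) * K ^ 3) := by
        rw [h.E_mul_F_sub, smul_mul_assoc, smul_smul]
    _ = (2 : ℂ)⁻¹ • (1 - K ^ 2) := by
        rw [sub_mul, h.K_mul_K_pow_three, hK_six, mul_inv, mul_left_comm,
          mul_inv_cancel₀ I_ne_zero, mul_one]

section Span

/-- The sixteen monomials `Kᶜ Eᵃ Fᵇ`, a spanning set of Poincaré–Birkhoff–Witt type. Putting the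
power of `K` on the left makes their span visibly stable under left multiplication by `K`. -/
def monomial (E F K : A) (i : Fin 4 × Fin 2 × Fin 2) : A :=
  K ^ (i.1 : ℕ) * (E ^ (i.2.1 : ℕ) * F ^ (i.2.2 : ℕ))

theorem pow_mul_pow_mul_pow_mem_span_monomial (h : IsQTriple E F K) (c a b : ℕ) :
    K ^ c * (E ^ a * F ^ b) ∈ Submodule.span ℂ (Set.range (monomial E F K)) := by
  rcases lt_or_ge a 2 with ha | ha
  · rcases lt_or_ge b 2 with hb | hb
    · rw [pow_eq_pow_mod c h.K_pow_four]
      exact Submodule.subset_span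
        ⟨(⟨c % 4, Nat.mod_lt c four_pos⟩, ⟨a, ha⟩, ⟨b, hb⟩), rfl⟩
    · simp [pow_eq_zero_of_le hb h.F_sq]
  · simp [pow_eq_zero_of_le ha h.E_sq]

theorem F_mul_E (h : IsQTriple E F K) : F * E = E * F - (2 * I)⁻¹ • (K - K ^ 3) := by
  rw [← h.E_mul_F_sub, sub_sub_cancel]

theorem mul_monomial_mem_span (h : IsQTriple E F K) {g : A} (hg : g ∈ ({E, F, K} : Set A))
    (i : Fin 4 × Fin 2 × Fin 2) :
    g * monomial E F K i ∈ Submodule.span ℂ (Set.range (monomial E F K)) := by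
  obtain ⟨c, a, b⟩ := i
  have mem := h.pow_mul_pow_mul_pow_mem_span_monomial
  rcases hg with rfl | rfl | rfl
  · rw [monomial, ← mul_assoc, mul_K_pow_of_anticommute h.K_mul_E, smul_mul_assoc, mul_assoc,
      ← mul_assoc g, ← pow_succ']
    exact Submodule.smul_mem _ _ (mem c (a + 1) b)
  · rw [monomial, ← mul_assoc, mul_K_pow_of_anticommute h.K_mul_F, smul_mul_assoc, mul_assoc]
    refine Submodule.smul_mem _ _ ?_
    fin_cases a
    · simpa [← pow_succ'] using mem c 0 (b + 1)
    · have hFE : K ^ (c : ℕ) * (g * (E ^ 1 * g ^ (b : ℕ))) =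
          K ^ (c : ℕ) * (E ^ 1 * g ^ (b + 1 : ℕ)) -
            (2 * I)⁻¹ • (K ^ (c + 1 : ℕ) * (E ^ 0 * g ^ (b : ℕ)) -
              K ^ (c + 3 : ℕ) * (E ^ 0 * g ^ (b : ℕ))) := by
        rw [pow_one, ← mul_assoc g, h.F_mul_E, pow_succ' g, pow_add K c 1, pow_add K c 3]
        simp only [sub_mul, mul_sub, smul_mul_assoc, mul_smul_comm, mul_assoc, pow_zero, pow_one,
          one_mul]
      exact hFE ▸ Submodule.sub_mem _ (mem _ _ _)
        (Submodule.smul_mem _ _ (Submodule.sub_mem _ (mem _ _ _) (mem _ _ _)))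
  · rw [monomial, ← mul_assoc, ← pow_succ']
    exact mem (c + 1) a b

theorem span_monomial_eq_top (h : IsQTriple E F K) (hgen : Algebra.adjoin ℂ {E, F, K} = ⊤) :
    Submodule.span ℂ (Set.range (monomial E F K)) = ⊤ := by
  refine submodule_eq_top_of_adjoin_eq_top hgen ?_ fun g hg x hx => ?_
  · simpa using h.pow_mul_pow_mul_pow_mem_span_monomial 0 0 0
  · induction hx using Submodule.span_induction with
    | mem x hx =>
      obtain ⟨i, rfl⟩ := hx
      exact h.mul_monomial_mem_span hg i
    | zero => simp
    | add x y _ _ hx hy => exact mul_add g x y ▸ Submodule.add_mem _ hx hy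
    | smul r x _ hx => exact mul_smul_comm r g x ▸ Submodule.smul_mem _ r hx

theorem moduleFinite (h : IsQTriple E F K) (hgen : Algebra.adjoin ℂ {E, F, K} = ⊤) :
    Module.Finite ℂ A :=
  ⟨h.span_monomial_eq_top hgen ▸ Submodule.fg_span (Set.finite_range _)⟩

theorem finrank_le (h : IsQTriple E F K) (hgen : Algebra.adjoin ℂ {E, F, K} = ⊤) :
    Module.finrank ℂ A ≤ 16 := by
  rw [← finrank_top, ← h.span_monomial_eq_top hgen]
  exact finrank_range_le_card (monomial E F K)

end Span

section Lift

theorem eq_of_QRel (h : IsQTriple E F K) ⦃a b : FA⦄ (hab : QRel a b) :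
    FreeAlgebra.lift ℂ (QGen.rec E F K (K ^ 3)) a =
      FreeAlgebra.lift ℂ (QGen.rec E F K (K ^ 3)) b := by
  have conj_eq_neg {x : A} (hx : K * x = -(x * K)) : K * x * K ^ 3 = -x := by
    rw [hx, neg_mul, mul_assoc, h.K_mul_K_pow_three, mul_one]
  cases hab <;>
    simp [ιE, ιF, ιK, ιKi, h.K_mul_K_pow_three, ← pow_succ, conj_eq_neg h.K_mul_E,
      conj_eq_neg h.K_mul_F, h.E_mul_F_sub, h.E_sq, h.F_sq, h.K_pow_four]

/-- The algebra homomorphism `Q → A` given by the universal property of `Q`. -/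
def lift (h : IsQTriple E F K) : Q →ₐ[ℂ] A :=
  RingQuot.liftAlgHom ℂ ⟨FreeAlgebra.lift ℂ (QGen.rec E F K (K ^ 3)), h.eq_of_QRel⟩

@[simp] theorem lift_gE (h : IsQTriple E F K) : h.lift gE = E := by simp [lift, gE, ιE]

@[simp] theorem lift_gF (h : IsQTriple E F K) : h.lift gF = F := by simp [lift, gF, ιF]

@[simp] theorem lift_gK (h : IsQTriple E F K) : h.lift gK = K := by simp [lift, gK, ιK]

end Lift

end IsQTriple

section Generators

theorem gK_mul_gKi : gK * gKi = 1 := by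
  simpa [gK, gKi] using RingQuot.mkAlgHom_rel ℂ QRel.KKi

theorem gKi_mul_gK : gKi * gK = 1 := by
  simpa [gK, gKi] using RingQuot.mkAlgHom_rel ℂ QRel.KiK

theorem gKi_eq_gK_pow_three : gKi = gK ^ 3 := by
  have gK_pow_four : gK ^ 4 = 1 := by
    simpa [gK] using RingQuot.mkAlgHom_rel ℂ QRel.K4
  rw [← mul_one gKi, ← gK_pow_four, pow_succ' gK 3, ← mul_assoc, gKi_mul_gK, one_mul]

theorem isQTriple_gE_gF_gK : IsQTriple gE gF gK where
  K_mul_E := mul_eq_neg_mul_of_conj_eq_neg gKi_mul_gK <| by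
    simpa [gK, gKi, gE] using RingQuot.mkAlgHom_rel ℂ QRel.KEKi
  K_mul_F := mul_eq_neg_mul_of_conj_eq_neg gKi_mul_gK <| by
    simpa [gK, gKi, gF] using RingQuot.mkAlgHom_rel ℂ QRel.KFKi
  E_mul_F_sub := by
    rw [← gKi_eq_gK_pow_three]
    simpa only [map_sub, map_mul, map_smul, gE, gF, gK, gKi] using RingQuot.mkAlgHom_rel ℂ QRel.EF
  E_sq := by simpa [gE] using RingQuot.mkAlgHom_rel ℂ QRel.Esq
  F_sq := by simpa [gF] using RingQuot.mkAlgHom_rel ℂ QRel.Fsq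
  K_pow_four := by simpa [gK] using RingQuot.mkAlgHom_rel ℂ QRel.K4

theorem adjoin_gE_gF_gK : Algebra.adjoin ℂ {gE, gF, gK} = ⊤ := by
  rw [eq_top_iff, ← (AlgHom.range_eq_top _).2 (RingQuot.mkAlgHom_surjective ℂ QRel),
    ← Algebra.map_top, ← FreeAlgebra.adjoin_range_ι, AlgHom.map_adjoin, Algebra.adjoin_le_iff]
  rintro _ ⟨_, ⟨g, rfl⟩, rfl⟩
  have hgK : gK ∈ Algebra.adjoin ℂ {gE, gF, gK} := Algebra.subset_adjoin (by simp)
  cases g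
  · exact Algebra.subset_adjoin (.inl rfl)
  · exact Algebra.subset_adjoin (.inr (.inl rfl))
  · exact hgK
  · change gKi ∈ _
    exact gKi_eq_gK_pow_three ▸ pow_mem hgK 3

instance moduleFinite_Q : Module.Finite ℂ Q := isQTriple_gE_gF_gK.moduleFinite adjoin_gE_gF_gK

theorem finrank_Q_le : Module.finrank ℂ Q ≤ 16 := isQTriple_gE_gF_gK.finrank_le adjoin_gE_gF_gK

theorem gK_sq_mul_comm (x : Q) : gK ^ 2 * x = x * gK ^ 2 :=
  (Subalgebra.mem_center_iff.1 (isQTriple_gE_gF_gK.K_sq_mem_center adjoin_gE_gF_gK) x).symm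

end Generators

section Idempotents

theorem e0_add_e1 : e0 + e1 = 1 := by
  simp only [e0, e1]
  module

theorem e1_eq_one_sub_e0 : e1 = 1 - e0 := eq_sub_of_add_eq' e0_add_e1

theorem isIdempotentElem_e0 : IsIdempotentElem e0 := by
  simp only [IsIdempotentElem, e0, smul_mul_smul_comm, add_mul, mul_add, one_mul, mul_one,
    isQTriple_gE_gF_gK.K_sq_mul_K_sq]
  module

theorem e0_mul_comm (x : Q) : e0 * x = x * e0 := by
  simp only [e0, smul_mul_assoc, mul_smul_comm, add_mul, mul_add, one_mul, mul_one, gK_sq_mul_comm]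

theorem e1_mul_comm (x : Q) : e1 * x = x * e1 := by
  rw [e1_eq_one_sub_e0, sub_mul, mul_sub, one_mul, mul_one, e0_mul_comm]

end Idempotents

section Fermions

theorem fp_mul_fm_add_fm_mul_fp : fp * fm + fm * fp = e1 := by
  rw [fp, fm, gKi_eq_gK_pow_three]
  exact isQTriple_gE_gF_gK.fermion_anticommutator

theorem map_fp_eq {Δ : Q →ₐ[ℂ] TP2 ℂ Q} (hΔF : Δ gF = gKi ⊗ₜ[ℂ] gF + gF ⊗ₜ[ℂ] (1 : Q)) :
    Δ fp = fp ⊗ₜ[ℂ] (1 : Q) + gKi ⊗ₜ[ℂ] fp := by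
  rw [fp, map_smul, hΔF, smul_add, ← TensorProduct.smul_tmul', TensorProduct.tmul_smul, add_comm]

theorem map_fm_eq {Δ : Q →ₐ[ℂ] TP2 ℂ Q} (hΔE : Δ gE = (1 : Q) ⊗ₜ[ℂ] gE + gE ⊗ₜ[ℂ] gK)
    (hΔK : Δ gK = gK ⊗ₜ[ℂ] gK) : Δ fm = fm ⊗ₜ[ℂ] (1 : Q) + gKi ⊗ₜ[ℂ] fm := by
  have hΔKi : Δ gKi = gKi ⊗ₜ[ℂ] gKi := by
    rw [gKi_eq_gK_pow_three, map_pow, hΔK, Algebra.TensorProduct.tmul_pow]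
  rw [fm, map_mul, hΔE, hΔKi, add_mul, Algebra.TensorProduct.tmul_mul_tmul,
    Algebra.TensorProduct.tmul_mul_tmul, gK_mul_gKi, one_mul, add_comm]

end Fermions

section CliffordSector

theorem mul_I_mul_mul_I {s : ℂ} (hs : s ^ 2 = 1) : s * I * (s * I) = -1 := by
  linear_combination I ^ 2 * hs + I_sq

theorem isQTriple_clifford {s : ℂ} (hs : s ^ 2 = 1) :
    IsQTriple !![0, 1; 0, 0] !![0, 0; s, 0] !![s * I, 0; 0, -(s * I)] where
  K_mul_E := by simp
  K_mul_F := by simp [mul_comm]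
  E_mul_F_sub := by
    rw [eq_inv_smul_iff₀ (by simp)]
    simp [pow_succ, mul_I_mul_mul_I hs, two_mul, add_mul, mul_comm I, sub_eq_add_neg]
  E_sq := by
    ext i j
    fin_cases i <;> fin_cases j <;> simp [pow_two]
  F_sq := by
    ext i j
    fin_cases i <;> fin_cases j <;> simp [pow_two]
  K_pow_four := by simp [pow_succ, mul_I_mul_mul_I hs, Matrix.one_fin_two]

/-- The Clifford module of sign `s`, on which `K² = -1`. -/
def cliffordRep {s : ℂ} (hs : s ^ 2 = 1) : Q →ₐ[ℂ] Matrix (Fin 2) (Fin 2) ℂ :=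
  (isQTriple_clifford hs).lift

variable {s : ℂ} (hs : s ^ 2 = 1)

theorem cliffordRep_gK_sq : cliffordRep hs (gK ^ 2) = -1 := by
  simp [cliffordRep, pow_two, mul_I_mul_mul_I hs, Matrix.one_fin_two]

theorem cliffordRep_e0 : cliffordRep hs e0 = 0 := by
  rw [e0, map_smul, map_add, map_one, cliffordRep_gK_sq, add_neg_cancel, smul_zero]

theorem cliffordRep_e1 : cliffordRep hs e1 = 1 := by
  rw [e1_eq_one_sub_e0, map_sub, map_one, cliffordRep_e0, sub_zero]

theorem cliffordRep_gE_mul_gF_add_gF_mul_gE :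
    cliffordRep hs (gE * gF + gF * gE) = s • 1 := by
  simp [cliffordRep, Matrix.one_fin_two]

theorem cliffordRep_surjective : Function.Surjective (cliffordRep hs) := by
  intro m
  have hscalar (z : ℂ) : s * z * s = z := by linear_combination z * hs
  refine ⟨(s * m 0 0) • (gE * gF) + m 0 1 • gE + (s * m 1 0) • gF + (s * m 1 1) • (gF * gE), ?_⟩
  rw [Matrix.eta_fin_two m]
  simp [cliffordRep, hscalar]

/-- The projection of `Q` to `Q₁`, modelled as the action on the Clifford modules of signs `1` and
`-1`. -/
def cliffordSectorHom : Q →ₐ[ℂ] Matrix (Fin 2) (Fin 2) ℂ × Matrix (Fin 2) (Fin 2) ℂ :=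
  (cliffordRep (one_pow 2)).prod (cliffordRep neg_one_sq)

theorem cliffordSectorHom_surjective : Function.Surjective cliffordSectorHom := by
  refine algHom_prod_surjective (cliffordRep_surjective _) (cliffordRep_surjective _)
    (z := (2 : ℂ)⁻¹ • (1 + (gE * gF + gF * gE))) ?_ ?_
  · rw [map_smul, map_add, map_one, cliffordRep_gE_mul_gF_add_gF_mul_gE]
    module
  · rw [map_smul, map_add, map_one, cliffordRep_gE_mul_gF_add_gF_mul_gE]
    module

theorem cliffordSectorHom_e0 : cliffordSectorHom e0 = 0 :=
  Prod.ext (cliffordRep_e0 _) (cliffordRep_e0 _)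

theorem cliffordSectorHom_e1 : cliffordSectorHom e1 = 1 :=
  Prod.ext (cliffordRep_e1 _) (cliffordRep_e1 _)

end CliffordSector

section NilpotentSector

variable {R : Type*} [CommRing R] [Algebra ℂ R] {x y : R}

theorem isQTriple_nilpotent (hx : x ^ 2 = 0) (hy : y ^ 2 = 0) :
    IsQTriple (x • !![0, 1; 1, 0]) (y • !![0, 1; 1, 0]) (!![1, 0; 0, -1] : Matrix _ _ R) where
  K_mul_E := by simp
  K_mul_F := by simp
  E_mul_F_sub := by simp [mul_comm x y, pow_succ]
  E_sq := by rw [smul_pow, hx, zero_smul]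
  F_sq := by rw [smul_pow, hy, zero_smul]
  K_pow_four := by simp [pow_succ, Matrix.one_fin_two]

/-- The representation of `Q` on `R²` attached to square-zero elements `x` and `y` of a commutative
algebra `R`, on which `K² = 1`. -/
def nilpotentRep (hx : x ^ 2 = 0) (hy : y ^ 2 = 0) : Q →ₐ[ℂ] Matrix (Fin 2) (Fin 2) R :=
  (isQTriple_nilpotent hx hy).lift

variable (hx : x ^ 2 = 0) (hy : y ^ 2 = 0)

theorem nilpotentRep_e1 : nilpotentRep hx hy e1 = 0 := by
  simp [nilpotentRep, e1, pow_two, Matrix.one_fin_two]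

theorem nilpotentRep_e0 : nilpotentRep hx hy e0 = 1 := by
  rw [← sub_eq_of_eq_add e0_add_e1.symm, map_sub, map_one, nilpotentRep_e1, sub_zero]

theorem not_isSemisimpleRing_range_nilpotentRep (hx_ne : x ≠ 0) :
    ¬ IsSemisimpleRing (nilpotentRep hx hy).range := by
  refine not_isSemisimpleRing_of_mul_mul_self_eq_zero
    (x := (nilpotentRep hx hy).rangeRestrict gE) (fun h => hx_ne ?_) fun a => Subtype.ext ?_
  · have gE_eq_zero : nilpotentRep hx hy gE = 0 := congrArg Subtype.val h
    simpa [nilpotentRep] using congrFun₂ gE_eq_zero 0 1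
  · change nilpotentRep hx hy gE * a * nilpotentRep hx hy gE = 0
    simp only [nilpotentRep, IsQTriple.lift_gE, smul_mul_assoc, mul_smul_comm, smul_smul, ← pow_two,
      hx, zero_smul]

/-- The action of `Q` on the row vector `(1, 1)`, which is cyclic when `x` and `y` generate `R`. -/
def rowOrbitMap : Q →ₗ[ℂ] Fin 2 → R :=
  Matrix.vecMulBilin ℂ ℂ 1 ∘ₗ (nilpotentRep hx hy).toLinearMap

theorem rowOrbitMap_apply (q : Q) : rowOrbitMap hx hy q = 1 ᵥ* nilpotentRep hx hy q := rfl

theorem rowOrbitMap_gE_mul (q : Q) : rowOrbitMap hx hy (gE * q) = x • rowOrbitMap hx hy q := by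
  rw [rowOrbitMap_apply, map_mul, ← Matrix.vecMul_vecMul, nilpotentRep, IsQTriple.lift_gE,
    Matrix.vecMul_smul, one_vecMul_swap, Matrix.smul_vecMul, ← nilpotentRep, rowOrbitMap_apply]

theorem rowOrbitMap_gF_mul (q : Q) : rowOrbitMap hx hy (gF * q) = y • rowOrbitMap hx hy q := by
  rw [rowOrbitMap_apply, map_mul, ← Matrix.vecMul_vecMul, nilpotentRep, IsQTriple.lift_gF,
    Matrix.vecMul_smul, one_vecMul_swap, Matrix.smul_vecMul, ← nilpotentRep, rowOrbitMap_apply]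

theorem single_one_mem_range_rowOrbitMap (j : Fin 2) :
    Pi.single j 1 ∈ (rowOrbitMap hx hy).range := by
  have half_add_half : (2 : ℂ)⁻¹ • (1 : R) + (2 : ℂ)⁻¹ • (1 : R) = 1 := by module
  refine ⟨(2 : ℂ)⁻¹ • (1 + (-1 : ℂ) ^ (j : ℕ) • gK), ?_⟩
  ext i
  fin_cases i <;> fin_cases j <;>
    simp [rowOrbitMap, nilpotentRep, Matrix.vecMul_smul, Matrix.vecMul_add, half_add_half,
      Matrix.vecHead, Matrix.vecTail]

theorem rowOrbitMap_surjective (hgen : Algebra.adjoin ℂ {x, y} = ⊤) :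
    Function.Surjective (rowOrbitMap hx hy) := by
  rw [← LinearMap.range_eq_top, eq_top_iff, ← LinearMap.iSup_range_single, iSup_le_iff]
  intro j
  rw [LinearMap.range_eq_map, Submodule.map_le_iff_le_comap, top_le_iff]
  refine submodule_eq_top_of_adjoin_eq_top hgen (single_one_mem_range_rowOrbitMap hx hy j) ?_
  rintro g hg r ⟨q, hq⟩
  rw [Submodule.mem_comap, ← smul_eq_mul, LinearMap.coe_single, Pi.single_smul,
    ← LinearMap.coe_single ℂ, ← hq]
  rcases hg with rfl | rfl
  · exact ⟨gE * q, rowOrbitMap_gE_mul hx hy q⟩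
  · exact ⟨gF * q, rowOrbitMap_gF_mul hx hy q⟩

theorem two_mul_finrank_le_finrank_range_nilpotentRep (hgen : Algebra.adjoin ℂ {x, y} = ⊤) :
    2 * Module.finrank ℂ R ≤ Module.finrank ℂ (nilpotentRep hx hy).range := by
  have hsurj := rowOrbitMap_surjective hx hy hgen
  have : Module.Finite ℂ R := Module.Finite.of_surjective
    (LinearMap.proj 0 ∘ₗ rowOrbitMap hx hy) ((Function.surjective_eval 0).comp hsurj)
  calc 2 * Module.finrank ℂ R = Module.finrank ℂ (Fin 2 → R) := by
        rw [Module.finrank_pi_fintype, Fin.sum_univ_two, two_mul]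
    _ = Module.finrank ℂ (rowOrbitMap hx hy).range := by
        rw [LinearMap.range_eq_top.2 hsurj, finrank_top]
    _ ≤ Module.finrank ℂ (nilpotentRep hx hy).toLinearMap.range := by
        rw [rowOrbitMap, LinearMap.range_comp]
        exact Submodule.finrank_map_le _ _

end NilpotentSector

section SectorDecomposition

theorem eps_sq (R : Type*) [CommSemiring R] : (ε : R[ε]) ^ 2 = 0 := by
  rw [pow_two, DualNumber.eps_mul_eps]

theorem inl_eps_sq (R : Type*) [CommSemiring R] : (TrivSqZeroExt.inl ε : R[ε][ε]) ^ 2 = 0 :=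
  (TrivSqZeroExt.inl_pow ε 2).trans (congrArg TrivSqZeroExt.inl (eps_sq R))

/-- The ideal `Q₀`, modelled as the image of `Q` in the `2 × 2` matrices over
`ℂ[ε][ε] = ℂ[x, y]/(x², y²)`, where `x` is the inner `ε` and `y` the outer one. -/
abbrev EvenSector : Type :=
  (nilpotentRep (R := ℂ[ε][ε]) (x := TrivSqZeroExt.inl ε) (y := ε) (inl_eps_sq ℂ)
    (eps_sq ℂ[ε])).range

/-- The homomorphism from `Q` to the product of its two sectors `Q₀` and `Q₁`. -/
def sectorHom : Q →ₐ[ℂ] EvenSector × (Matrix (Fin 2) (Fin 2) ℂ × Matrix (Fin 2) (Fin 2) ℂ) :=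
  (nilpotentRep _ _).rangeRestrict.prod cliffordSectorHom

theorem sectorHom_e0 : sectorHom e0 = (1, 0) :=
  Prod.ext (Subtype.ext (nilpotentRep_e0 _ _)) cliffordSectorHom_e0

theorem sectorHom_e1 : sectorHom e1 = (0, 1) :=
  Prod.ext (Subtype.ext (nilpotentRep_e1 _ _)) cliffordSectorHom_e1

theorem sectorHom_surjective : Function.Surjective sectorHom :=
  algHom_prod_surjective (AlgHom.rangeRestrict_surjective _) cliffordSectorHom_surjective
    (congrArg Prod.fst sectorHom_e0) cliffordSectorHom_e0

instance moduleFinite_evenSector : Module.Finite ℂ EvenSector :=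
  Module.Finite.of_surjective (nilpotentRep _ _).rangeRestrict.toLinearMap
    (AlgHom.rangeRestrict_surjective _)

theorem eight_le_finrank_evenSector : 8 ≤ Module.finrank ℂ EvenSector := by
  have : Module.Finite ℂ ℂ[ε] := inferInstanceAs (Module.Finite ℂ (ℂ × ℂ))
  have hfinrank : Module.finrank ℂ ℂ[ε][ε] = 4 := by
    rw [finrank_dualNumber, finrank_dualNumber, Module.finrank_self]
  have hle := two_mul_finrank_le_finrank_range_nilpotentRep (R := ℂ[ε][ε])
    (inl_eps_sq ℂ) (eps_sq ℂ[ε]) (adjoin_inl_eps_eps ℂ)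
  rwa [hfinrank] at hle

theorem finrank_sectors :
    Module.finrank ℂ (EvenSector × (Matrix (Fin 2) (Fin 2) ℂ × Matrix (Fin 2) (Fin 2) ℂ)) =
      Module.finrank ℂ EvenSector + 8 := by
  rw [Module.finrank_prod, Module.finrank_prod, Module.finrank_matrix, Module.finrank_self,
    Fintype.card_fin]

theorem finrank_evenSector_add_eight_le : Module.finrank ℂ EvenSector + 8 ≤ Module.finrank ℂ Q :=
  finrank_sectors ▸ LinearMap.finrank_le_finrank_of_surjective (f := sectorHom.toLinearMap)
    sectorHom_surjective

theorem finrank_evenSector : Module.finrank ℂ EvenSector = 8 :=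
  le_antisymm (Nat.le_of_add_le_add_right (finrank_evenSector_add_eight_le.trans finrank_Q_le))
    eight_le_finrank_evenSector

theorem finrank_Q : Module.finrank ℂ Q = 16 :=
  le_antisymm finrank_Q_le ((Nat.add_le_add_right eight_le_finrank_evenSector 8).trans
    finrank_evenSector_add_eight_le)

theorem sectorHom_bijective : Function.Bijective sectorHom := by
  have hinj := LinearMap.injective_iff_surjective_of_finrank_eq_finrank (f := sectorHom.toLinearMap)
    (by rw [finrank_sectors, finrank_evenSector, finrank_Q])
  exact ⟨hinj.2 sectorHom_surjective, sectorHom_surjective⟩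

theorem not_isSemisimpleRing_evenSector : ¬ IsSemisimpleRing EvenSector :=
  not_isSemisimpleRing_range_nilpotentRep _ _ fun h => by
    simpa using congrArg (TrivSqZeroExt.snd ∘ TrivSqZeroExt.fst) h

end SectorDecomposition

end RestrictedQuantumGroup

/-- the central orthogonal idempotents `e₀, e₁`, the fermionic generators
`f± = −iF, EK⁻¹`, and the algebra decomposition `Q = Q₀ ⊕ Q₁` with
`Q₁ ≅ M₂(ℂ) × M₂(ℂ)` semisimple and `Q₀` eight-dimensional non-semisimple. -/
theorem statement1 (Δ : Q →ₐ[ℂ] TP2 ℂ Q)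
    (hΔE : Δ gE = (1:Q) ⊗ₜ[ℂ] gE + gE ⊗ₜ[ℂ] gK)
    (hΔF : Δ gF = gKi ⊗ₜ[ℂ] gF + gF ⊗ₜ[ℂ] (1:Q))
    (hΔK : Δ gK = gK ⊗ₜ[ℂ] gK) :
    e0 * e0 = e0 ∧ e1 * e1 = e1 ∧ e0 * e1 = 0 ∧ e1 * e0 = 0 ∧ e0 + e1 = 1 ∧
    (∀ x : Q, e0 * x = x * e0) ∧ (∀ x : Q, e1 * x = x * e1) ∧
    fp * fm + fm * fp = e1 ∧
    Δ fp = fp ⊗ₜ[ℂ] (1:Q) + gKi ⊗ₜ[ℂ] fp ∧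
    Δ fm = fm ⊗ₜ[ℂ] (1:Q) + gKi ⊗ₜ[ℂ] fm ∧
    ∃ (A₀ : Type) (_ : Ring A₀) (_ : Algebra ℂ A₀)
      (ψ : Q ≃ₐ[ℂ] A₀ × (Matrix (Fin 2) (Fin 2) ℂ × Matrix (Fin 2) (Fin 2) ℂ)),
      Module.finrank ℂ A₀ = 8 ∧ ¬ IsSemisimpleRing A₀ ∧
      ψ e0 = (1, 0) ∧ ψ e1 = (0, 1) := by
  open RestrictedQuantumGroup in
  exact ⟨isIdempotentElem_e0, e1_eq_one_sub_e0 ▸ isIdempotentElem_e0.one_sub,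
    e1_eq_one_sub_e0 ▸ isIdempotentElem_e0.mul_one_sub_self,
    e1_eq_one_sub_e0 ▸ isIdempotentElem_e0.one_sub_mul_self, e0_add_e1, e0_mul_comm, e1_mul_comm,
    fp_mul_fm_add_fm_mul_fp, map_fp_eq hΔF, map_fm_eq hΔE hΔK, EvenSector, inferInstance,
    inferInstance, AlgEquiv.ofBijective sectorHom sectorHom_bijective,
    finrank_evenSector, not_isSemisimpleRing_evenSector, sectorHom_e0, sectorHom_e1⟩
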